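/- Let d ≥ 2 be an integer, let h = (h₁,…,h_d) satisfy 0 < h₁ ≤ ⋯ ≤ h_d ≤ 1, and let p ∈ P_h. Then sup_{t ≥ 0} |p''(t)| ≤ ((16d² − 24d + 11)/3) · sup_{t ≥ 0} |p(t)|. -/

import Mathlib

/-- The sup of `|p|` over the half-line `[0, ∞)`. -/
noncomputable def supAbs (p : ℝ → ℝ) : ℝ :=
  sSup ((fun t => |p t|) '' Set.Ici (0 : ℝ))

/-- The space `P_h` of exponential polynomials with exponents `h₁ ≤ ⋯ ≤ h_d`:
the span of the functions `t^m * exp (-h i * t)`, where `m` is the number of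
indices `j < i` with `h j = h i`. -/
def expPoly (d : ℕ) (h : Fin d → ℝ) : Set (ℝ → ℝ) :=
  {p | ∃ c : Fin d → ℝ, ∀ t : ℝ,
      p t = ∑ i : Fin d,
        c i * t ^ (Nat.card {j : Fin d // j < i ∧ h j = h i}) * Real.exp (-(h i) * t)}

namespace MB

open Polynomial Filter Topology
open scoped ContDiff

/-- Smooth functions. -/
def E : Submodule ℝ (ℝ → ℝ) where
  carrier := {f | ContDiff ℝ ∞ f}
  add_mem' := by
    intro a b ha hb
    exact ContDiff.add (𝕜 := ℝ) (n := ∞) ha hb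
  zero_mem' := by
    show ContDiff ℝ ∞ (fun _ : ℝ => (0:ℝ))
    exact contDiff_const
  smul_mem' := by
    intro c f hf
    have hf' : ContDiff ℝ ∞ f := hf
    show ContDiff ℝ ∞ (fun x => c * f x)
    exact contDiff_const.mul hf'

theorem E.smooth (f : E) : ContDiff ℝ ∞ (f : ℝ → ℝ) := f.2

theorem E.diff (f : E) : Differentiable ℝ (f : ℝ → ℝ) :=
  (E.smooth f).differentiable (by simp)

/-- The derivative. -/
noncomputable def D : Module.End ℝ E where
  toFun f := ⟨deriv f, (contDiff_infty_iff_deriv.1 f.2).2⟩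
  map_add' f g := by
    apply Subtype.ext; funext x
    exact deriv_add (E.diff f x) (E.diff g x)
  map_smul' c f := by
    apply Subtype.ext; funext x
    exact deriv_const_smul c (E.diff f x)

theorem hasD (f : E) (x : ℝ) : HasDerivAt (f : ℝ → ℝ) ((D f : ℝ → ℝ) x) x :=
  (E.diff f x).hasDerivAt

theorem cont (f : E) : Continuous (f : ℝ → ℝ) := (E.diff f).continuous

/-- Differential operator. -/
noncomputable def op (P : ℝ[X]) : Module.End ℝ E := aeval D P

theorem op_mul (P Q : ℝ[X]) (f : E) : op (P * Q) f = op P (op Q f) := by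
  simp [op]

theorem op_comm (P Q : ℝ[X]) (f : E) : op P (op Q f) = op Q (op P f) := by
  rw [← op_mul, mul_comm, op_mul]

theorem op_D (P : ℝ[X]) (f : E) : op P (D f) = D (op P f) := by
  have := op_comm P X f
  simpa [op] using this

theorem op_lin (a : ℝ) (f : E) : op (X + C a) f = D f + a • f := by
  simp [op]

theorem op_lin_apply (a : ℝ) (f : E) (x : ℝ) :
    (op (X + C a) f : ℝ → ℝ) x = (D f : ℝ → ℝ) x + a * (f : ℝ → ℝ) x := by
  rw [op_lin]; rfl

/-- Product of linear factors. -/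
noncomputable def Pl (l : List ℝ) : ℝ[X] := (l.map (fun a => X + C a)).prod

theorem Pl_nil : Pl [] = 1 := rfl
theorem Pl_cons (a : ℝ) (l : List ℝ) : Pl (a :: l) = (X + C a) * Pl l := by simp [Pl]
theorem op_one (f : E) : op 1 f = f := by simp [op]
theorem op_cons (a : ℝ) (l : List ℝ) (f : E) : op (Pl (a :: l)) f = op (Pl l) (op (X + C a) f) := by
  rw [Pl_cons, op_mul, op_comm]
theorem op_cons' (a : ℝ) (l : List ℝ) (f : E) : op (Pl (a :: l)) f = op (X + C a) (op (Pl l) f) := by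
  rw [Pl_cons, op_mul]

theorem hasExp (a : ℝ) (f : E) (x : ℝ) :
    HasDerivAt (fun x => Real.exp (a * x) * (f : ℝ → ℝ) x)
      (Real.exp (a * x) * (op (X + C a) f : ℝ → ℝ) x) x := by
  have h1 : HasDerivAt (fun x => Real.exp (a * x)) (Real.exp (a * x) * (a * 1)) x :=
    ((hasDerivAt_id x).const_mul a).exp
  refine (h1.mul (hasD f x)).congr_deriv ?_
  rw [op_lin_apply]; ring

/-- `k` zeros beyond `c`. -/
def HZ (f : ℝ → ℝ) : ℝ → ℕ → Prop
  | _, 0 => True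
  | c, k + 1 => ∃ z, c < z ∧ f z = 0 ∧ HZ f z k

theorem HZ.mono {f : ℝ → ℝ} {c c' : ℝ} {k : ℕ} (h : HZ f c k) (hc : c' ≤ c) : HZ f c' k := by
  cases k with
  | zero => trivial
  | succ k =>
    obtain ⟨z, h1, h2, h3⟩ := h
    exact ⟨z, by linarith, h2, h3⟩

theorem rolle1 (a : ℝ) (f : E) {x y : ℝ} (hxy : x < y) (hx : (f : ℝ → ℝ) x = 0)
    (hy : (f : ℝ → ℝ) y = 0) : ∃ z, x < z ∧ z < y ∧ (op (X + C a) f : ℝ → ℝ) z = 0 := by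
  obtain ⟨z, hz, h0⟩ := exists_hasDerivAt_eq_zero hxy
    (f := fun x => Real.exp (a * x) * (f : ℝ → ℝ) x)
    (fun x _ => (hasExp a f x).continuousAt.continuousWithinAt)
    (by simp [hx, hy]) (fun x _ => hasExp a f x)
  refine ⟨z, hz.1, hz.2, ?_⟩
  simpa [Real.exp_ne_zero] using h0

theorem rolleZ (a : ℝ) (f : E) (k : ℕ) : ∀ z : ℝ, (f : ℝ → ℝ) z = 0 → HZ f z k →
    HZ (op (X + C a) f : ℝ → ℝ) z k := by
  induction k with
  | zero => intros; trivial
  | succ k ih =>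
    rintro z hz ⟨w, hw, hw0, hk⟩
    obtain ⟨y, h1, h2, h3⟩ := rolle1 a f hw hz hw0
    exact ⟨y, h1, h3, (ih w hw0 hk).mono h2.le⟩

theorem rolleS (a : ℝ) (f : E) (k : ℕ) (c : ℝ) (h : HZ f c (k+1)) :
    HZ (op (X + C a) f : ℝ → ℝ) c k := by
  obtain ⟨w, hw, hw0, hk⟩ := h
  exact (rolleZ a f k w hw0 hk).mono hw.le

theorem rolleL (l : List ℝ) : ∀ (f : E) (c : ℝ), HZ f c (l.length + 1) →
    HZ (op (Pl l) f : ℝ → ℝ) c 1 := by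
  induction l with
  | nil => intro f c h; simpa [Pl_nil, op_one] using h
  | cons a l ih =>
    intro f c h
    rw [op_cons]
    exact ih _ _ (rolleS a f _ c h)

theorem lemA (l : List ℝ) : ∀ (f : E) (c : ℝ), (∀ x, 0 ≤ (op (Pl l) f : ℝ → ℝ) x) →
    HZ f c l.length → 0 ≤ (-1 : ℝ) ^ l.length * (f : ℝ → ℝ) c := by
  induction l with
  | nil => intro f c h _; simpa [Pl_nil, op_one] using h c
  | cons a l ih =>
    rintro f c h ⟨z, hz, hz0, hk⟩
    rw [op_cons] at h
    have h1 := rolleZ a f _ z hz0 hk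
    have h2 : ∀ c', c' ≤ z → 0 ≤ (-1 : ℝ) ^ l.length * (op (X + C a) f : ℝ → ℝ) c' :=
      fun c' hc' => ih _ c' h (h1.mono hc')
    have h3 : MonotoneOn (fun x => (-1 : ℝ) ^ l.length * (Real.exp (a * x) * (f : ℝ → ℝ) x))
        (Set.Icc c z) := by
      apply monotoneOn_of_hasDerivWithinAt_nonneg (convex_Icc c z)
        (fun x _ => ((hasExp a f x).const_mul _).continuousAt.continuousWithinAt)
        (fun x _ => ((hasExp a f x).const_mul _).hasDerivWithinAt)
      intro x hx
      rw [interior_Icc] at hx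
      have := h2 x hx.2.le
      have h4 := mul_nonneg (Real.exp_pos (a * x)).le this
      linarith
    have h5 := h3 (Set.left_mem_Icc.2 hz.le) (Set.right_mem_Icc.2 hz.le) hz.le
    simp only [hz0, mul_zero] at h5
    have h6 : (-1 : ℝ) ^ l.length * (f : ℝ → ℝ) c ≤ 0 := by
      by_contra hh
      push Not at hh
      have := mul_pos (Real.exp_pos (a * c)) hh
      linarith
    rw [List.length_cons, pow_succ]; linarith

theorem HZ_of_zeros (f : ℝ → ℝ) (n : ℕ) : ∀ (t : ℕ → ℝ), (∀ i < n, t i < t (i+1)) →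
    (∀ i, i < n → f (t (i+1)) = 0) → HZ f (t 0) n := by
  induction n with
  | zero => intros; trivial
  | succ n ih =>
    intro t ht h
    exact ⟨t 1, ht 0 (by omega), h 0 (by omega), ih (fun i => t (i+1))
      (fun i hi => ht (i+1) (by omega)) (fun i hi => h (i+1) (by omega))⟩

theorem HZ_of_alt (f : ℝ → ℝ) (hf : Continuous f) (n : ℕ) : ∀ (t : ℕ → ℝ),
    (∀ i < n, t i < t (i+1)) →
    (∀ i, i < n → f (t i) * f (t (i+1)) < 0) → HZ f (t 0) n := by
  induction n with
  | zero => intros; trivial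
  | succ n ih =>
    intro t ht h
    have h0 := h 0 (by omega)
    have ht0 := ht 0 (by omega)
    have : ∃ z ∈ Set.Icc (t 0) (t 1), f z = 0 := by
      rcases mul_neg_iff.1 h0 with ⟨h1, h2⟩ | ⟨h1, h2⟩
      · exact intermediate_value_Icc' ht0.le hf.continuousOn ⟨h2.le, h1.le⟩
      · exact intermediate_value_Icc ht0.le hf.continuousOn ⟨h1.le, h2.le⟩
    obtain ⟨z, hz, hz0⟩ := this
    refine ⟨z, lt_of_le_of_ne hz.1 ?_, hz0, (ih (fun i => t (i+1))
      (fun i hi => ht (i+1) (by omega)) (fun i hi => h (i+1) (by omega))).mono hz.2⟩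
    rintro rfl
    simp [hz0] at h0

/-! decay -/

theorem decay1_aux (b : ℝ) (hb : 0 < b) (f : E)
    (h : Tendsto (op (X + C b) f : ℝ → ℝ) atTop (𝓝 0)) (ε : ℝ) (hε : 0 < ε) :
    ∀ᶠ x in atTop, (f : ℝ → ℝ) x < ε := by
  have h1 : ∀ᶠ x in atTop, (op (X + C b) f : ℝ → ℝ) x < b * (ε / 2) :=
    h.eventually_lt_const (by positivity)
  obtain ⟨T, hT⟩ := eventually_atTop.1 h1
  have hder : ∀ x, HasDerivAt (fun x => Real.exp (b * x) * ((f : ℝ → ℝ) x) - Real.exp (b * x) * (ε / 2))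
      (Real.exp (b * x) * (op (X + C b) f : ℝ → ℝ) x - Real.exp (b * x) * (b * 1) * (ε / 2)) x := by
    intro x
    exact (hasExp b f x).sub ((((hasDerivAt_id x).const_mul b).exp).mul_const _)
  have hanti : AntitoneOn (fun x => Real.exp (b * x) * ((f : ℝ → ℝ) x) - Real.exp (b * x) * (ε / 2))
      (Set.Ici T) := by
    apply antitoneOn_of_hasDerivWithinAt_nonpos (convex_Ici T)
      (fun x _ => (hder x).continuousAt.continuousWithinAt)
      (fun x _ => (hder x).hasDerivWithinAt)
    intro x hx
    rw [interior_Ici] at hx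
    have h2 := hT x (le_of_lt hx)
    have h3 := mul_pos (Real.exp_pos (b * x)) (sub_pos.2 h2)
    nlinarith
  set K := Real.exp (b * T) * ((f : ℝ → ℝ) T) - Real.exp (b * T) * (ε / 2) with hK
  have hlim : Tendsto (fun x => Real.exp (b * x)) atTop atTop :=
    Real.tendsto_exp_atTop.comp (tendsto_id.const_mul_atTop hb)
  have h4 : ∀ᶠ x in atTop, 2 * K / ε < Real.exp (b * x) := hlim.eventually_gt_atTop _
  filter_upwards [h4, eventually_ge_atTop T] with x hx hxT
  have h5 := hanti (Set.mem_Ici.2 le_rfl) (Set.mem_Ici.2 hxT) hxT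
  simp only at h5
  rw [div_lt_iff₀ hε] at hx
  have h6 := Real.exp_pos (b * x)
  by_contra hcon
  push Not at hcon
  have := mul_le_mul_of_nonneg_left hcon h6.le
  nlinarith

theorem decay1 (b : ℝ) (hb : 0 < b) (f : E)
    (h : Tendsto (op (X + C b) f : ℝ → ℝ) atTop (𝓝 0)) : Tendsto (f : ℝ → ℝ) atTop (𝓝 0) := by
  rw [Metric.tendsto_nhds]
  intro ε hε
  have h1 := decay1_aux b hb f h ε hε
  have h2 := decay1_aux b hb (-f) (by
    rw [map_neg]
    have := h.neg
    rw [neg_zero] at this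
    exact this) ε hε
  filter_upwards [h1, h2] with x hx1 hx2
  have hx2' : - (f : ℝ → ℝ) x < ε := hx2
  rw [Real.dist_eq, sub_zero, abs_lt]
  constructor <;> linarith

theorem decay (l : List ℝ) (hl : ∀ a ∈ l, 0 < a) : ∀ (f : E), op (Pl l) f = 0 →
    Tendsto (f : ℝ → ℝ) atTop (𝓝 0) := by
  induction l with
  | nil =>
    intro f h
    rw [Pl_nil, op_one] at h
    rw [h]; exact tendsto_const_nhds
  | cons a l ih =>
    intro f h
    rw [op_cons] at h
    exact decay1 a (hl a (by simp)) f (ih (fun b hb => hl b (by simp [hb])) _ h)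

theorem rolleInf (f : E) (z : ℝ) (hz : (f : ℝ → ℝ) z = 0)
    (h : Tendsto (f : ℝ → ℝ) atTop (𝓝 0)) : ∃ y, z < y ∧ (D f : ℝ → ℝ) y = 0 := by
  by_contra hcon
  push Not at hcon
  have key : ∀ g : E, (g : ℝ → ℝ) z = 0 → Tendsto (g : ℝ → ℝ) atTop (𝓝 0) →
      ¬ (∀ y, z < y → 0 < (D g : ℝ → ℝ) y) := by
    intro g hg hg0 hpos
    have hm : StrictMonoOn (g : ℝ → ℝ) (Set.Ici z) := by
      apply strictMonoOn_of_hasDerivWithinAt_pos (convex_Ici z) (cont g).continuousOn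
        (fun x _ => (hasD g x).hasDerivWithinAt)
      intro x hx
      rw [interior_Ici] at hx
      exact hpos x hx
    have h1 : 0 < (g : ℝ → ℝ) (z + 1) := by
      have := hm (Set.mem_Ici.2 le_rfl) (Set.mem_Ici.2 (by linarith : z ≤ z + 1)) (by linarith)
      linarith
    have h2 : ∀ᶠ x in atTop, (g : ℝ → ℝ) x < (g : ℝ → ℝ) (z + 1) := hg0.eventually_lt_const h1
    obtain ⟨x, hx1, hx2⟩ := (h2.and (eventually_ge_atTop (z + 1))).exists
    have := hm.monotoneOn (Set.mem_Ici.2 (by linarith : z ≤ z + 1))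
      (Set.mem_Ici.2 (by linarith : z ≤ x)) hx2
    linarith
  have hsign : (∀ y ∈ Set.Ioi z, (D f : ℝ → ℝ) y < 0) ∨ (∀ y ∈ Set.Ioi z, 0 < (D f : ℝ → ℝ) y) := by
    by_contra hh
    push Not at hh
    obtain ⟨⟨y1, hy1, h1⟩, y2, hy2, h2⟩ := hh
    obtain ⟨y, hy, hy0⟩ := (convex_Ioi z).isPreconnected.intermediate_value hy2 hy1
      (cont (D f)).continuousOn ⟨h2, h1⟩
    exact hcon y hy hy0
  rcases hsign with h1 | h1
  · refine key (-f) (by simp [hz]) ?_ ?_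
    · have := h.neg
      rw [neg_zero] at this; exact this
    · intro y hy
      rw [map_neg]
      have : 0 < - (D f : ℝ → ℝ) y := by linarith [h1 y hy]
      exact this
  · exact key f hz h h1

theorem rolleInfZ (f : E) (h : Tendsto (f : ℝ → ℝ) atTop (𝓝 0)) (k : ℕ) :
    ∀ z : ℝ, (f : ℝ → ℝ) z = 0 → HZ f z k → HZ (D f : ℝ → ℝ) z (k + 1) := by
  induction k with
  | zero =>
    intro z hz _
    obtain ⟨y, h1, h2⟩ := rolleInf f z hz h
    exact ⟨y, h1, h2, trivial⟩
  | succ k ih =>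
    rintro z hz ⟨w, hw, hw0, hk⟩
    obtain ⟨y, h1, h2, h3⟩ := rolle1 0 f hw hz hw0
    refine ⟨y, h1, ?_, (ih w hw0 hk).mono h2.le⟩
    rw [op_lin_apply] at h3
    simpa using h3

theorem rolleInfS (f : E) (h : Tendsto (f : ℝ → ℝ) atTop (𝓝 0)) (k : ℕ) (c : ℝ)
    (hk : HZ f c k) : HZ (D f : ℝ → ℝ) c k := by
  cases k with
  | zero => trivial
  | succ k =>
    obtain ⟨w, hw, hw0, hk⟩ := hk
    exact (rolleInfZ f h k w hw0 hk).mono hw.le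

/-! solving first order equations -/

theorem solve1 (a : ℝ) (r : E) (h : op (X + C a) r = 0) :
    ∃ β, ∀ x, (r : ℝ → ℝ) x = β * Real.exp (-a * x) := by
  refine ⟨(r : ℝ → ℝ) 0, fun x => ?_⟩
  have h1 : ∀ x, HasDerivAt (fun x => Real.exp (a * x) * (r : ℝ → ℝ) x) 0 x := by
    intro x
    have := hasExp a r x
    rw [h] at this
    simpa using this
  have h2 := is_const_of_deriv_eq_zero (fun x => (h1 x).differentiableAt) (fun x => (h1 x).deriv) x 0
  simp only [mul_zero, Real.exp_zero, one_mul] at h2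
  rw [← h2, mul_right_comm, ← Real.exp_add]
  simp

theorem antideriv (g : E) : ∃ y : E, D y = g := by
  have h1 : ∀ x, HasDerivAt (fun x => ∫ s in (0:ℝ)..x, (g : ℝ → ℝ) s) ((g : ℝ → ℝ) x) x := by
    intro x
    exact intervalIntegral.integral_hasDerivAt_right ((cont g).intervalIntegrable _ _)
      ((cont g).stronglyMeasurableAtFilter _ _) (cont g).continuousAt
  have h2 : deriv (fun x => ∫ s in (0:ℝ)..x, (g : ℝ → ℝ) s) = g := funext fun x => (h1 x).deriv
  refine ⟨⟨fun x => ∫ s in (0:ℝ)..x, (g : ℝ → ℝ) s, contDiff_infty_iff_deriv.2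
    ⟨fun x => (h1 x).differentiableAt, by rw [h2]; exact g.2⟩⟩, Subtype.ext h2⟩

/-- exponential -/
noncomputable def ex (a : ℝ) : E := ⟨fun x => Real.exp (a * x), by
  show ContDiff ℝ ∞ _
  fun_prop⟩

theorem D_ex (a : ℝ) : D (ex a) = a • ex a := by
  apply Subtype.ext; funext x
  have : HasDerivAt (fun x => Real.exp (a * x)) (Real.exp (a * x) * (a * 1)) x :=
    ((hasDerivAt_id x).const_mul a).exp
  refine this.deriv.trans ?_
  show _ = a * Real.exp (a * x)
  ring

/-- multiplication by smooth function -/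
def mulE (f g : E) : E := ⟨fun x => (f : ℝ → ℝ) x * (g : ℝ → ℝ) x, (E.smooth f).mul (E.smooth g)⟩

theorem D_mulE (f g : E) : D (mulE f g) = mulE (D f) g + mulE f (D g) := by
  apply Subtype.ext; funext x
  exact ((hasD f x).mul (hasD g x)).deriv

theorem solve_b (b : ℝ) (g : E) : ∃ y : E, op (X + C b) y = g := by
  obtain ⟨z, hz⟩ := antideriv (mulE (ex b) g)
  refine ⟨mulE (ex (-b)) z, ?_⟩
  rw [op_lin, D_mulE, hz, D_ex]
  apply Subtype.ext; funext x
  show (-b * Real.exp (-b * x)) * (z : ℝ → ℝ) x + Real.exp (-b * x) * (Real.exp (b * x) * (g : ℝ → ℝ) x)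
    + b * (Real.exp (-b * x) * (z : ℝ → ℝ) x) = _
  have : Real.exp (-b * x) * Real.exp (b * x) = 1 := by
    rw [← Real.exp_add]; simp
  linear_combination (g : ℝ → ℝ) x * this

theorem solveL (l : List ℝ) : ∀ g : E, ∃ y : E, op (Pl l) y = g := by
  induction l with
  | nil => intro g; exact ⟨g, by rw [Pl_nil, op_one]⟩
  | cons a l ih =>
    intro g
    obtain ⟨y, hy⟩ := ih g
    obtain ⟨w, hw⟩ := solve_b a y
    exact ⟨w, by rw [op_cons, hw, hy]⟩

theorem interp (l : List ℝ) : ∀ (t : ℕ → ℝ), (∀ i, i + 1 < l.length → t i < t (i+1)) →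
    ∀ w : ℕ → ℝ, ∃ f : E, op (Pl l) f = 0 ∧ ∀ i < l.length, (f : ℝ → ℝ) (t i) = w i := by
  induction l with
  | nil => intro t _ w; exact ⟨0, by simp, by simp⟩
  | cons a l ih =>
    intro t ht w
    simp only [List.length_cons] at ht
    have ih' := ih t (fun i hi => ht i (by omega))
    obtain ⟨f0, hf0, hf0'⟩ := ih' w
    obtain ⟨e, he⟩ := solveL l (ex (-a))
    obtain ⟨e1, he1, he1'⟩ := ih' (fun i => (e : ℝ → ℝ) (t i))
    have hne : (e : ℝ → ℝ) (t l.length) - (e1 : ℝ → ℝ) (t l.length) ≠ 0 := by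
      intro h0
      have hz : HZ (e - e1 : E) (t 0 - 1) (l.length + 1) := by
        have := HZ_of_zeros (e - e1 : E) (l.length + 1)
          (fun i => match i with | 0 => t 0 - 1 | i + 1 => t i) ?_ ?_
        · exact this
        · intro i hi
          match i with
          | 0 => simp
          | i + 1 => exact ht i (by omega)
        · intro i hi
          show (e : ℝ → ℝ) (t i) - (e1 : ℝ → ℝ) (t i) = 0
          rcases Nat.lt_succ_iff_lt_or_eq.1 hi with h | h
          · rw [he1' i h]; ring
          · rw [h]; exact h0
      obtain ⟨y, _, hy, _⟩ := rolleL l _ _ hz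
      rw [map_sub, he, he1, sub_zero] at hy
      exact Real.exp_ne_zero _ hy
    set γ := (w l.length - (f0 : ℝ → ℝ) (t l.length)) /
      ((e : ℝ → ℝ) (t l.length) - (e1 : ℝ → ℝ) (t l.length)) with hγ
    refine ⟨f0 + γ • (e - e1), ?_, ?_⟩
    · rw [op_cons', map_add, hf0, map_smul, map_sub, he, he1, zero_add, sub_zero, map_smul, op_lin,
        D_ex]
      rw [← add_smul]; simp
    · intro i hi
      show (f0 : ℝ → ℝ) (t i) + γ * ((e : ℝ → ℝ) (t i) - (e1 : ℝ → ℝ) (t i)) = w i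
      rcases Nat.lt_succ_iff_lt_or_eq.1 hi with h | h
      · rw [he1' i h, hf0' i h]; ring
      · rw [h, hγ, div_mul_cancel₀ _ hne]; ring



theorem HZ.smul {f : E} {c : ℝ} {k : ℕ} (s : ℝ) (h : HZ f c k) : HZ (s • f : E) c k := by
  induction k generalizing c with
  | zero => trivial
  | succ k ih =>
    obtain ⟨z, h1, h2, h3⟩ := h
    refine ⟨z, h1, ?_, ih h3⟩
    show s * (f : ℝ → ℝ) z = 0
    rw [h2, mul_zero]

theorem neg_one_sq_pow (n : ℕ) : (-1 : ℝ) ^ n * (-1) ^ n = 1 := by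
  rw [← mul_pow]; simp

theorem lemA' (l : List ℝ) (f : E) (c : ℝ)
    (h : ∀ x, 0 ≤ (-1 : ℝ) ^ l.length * (op (Pl l) f : ℝ → ℝ) x)
    (hz : HZ f c l.length) : 0 ≤ (f : ℝ → ℝ) c := by
  have := lemA l ((-1 : ℝ) ^ l.length • f) c (by
    intro x; rw [map_smul]; exact h x) (hz.smul _)
  have h2 : 0 ≤ (-1 : ℝ) ^ l.length * ((-1 : ℝ) ^ l.length * (f : ℝ → ℝ) c) := this
  rwa [← mul_assoc, neg_one_sq_pow, one_mul] at h2

theorem beta_sign (l : List ℝ) (f : E) (c β b : ℝ)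
    (hR : ∀ x, (op (Pl l) f : ℝ → ℝ) x = β * Real.exp (-b * x))
    (hz : HZ f c l.length) (hpos : 0 < (f : ℝ → ℝ) c) : 0 ≤ (-1 : ℝ) ^ l.length * β := by
  by_contra hcon
  push Not at hcon
  have := lemA' l ((-1 : ℝ) • f) c (by
    intro x
    rw [map_smul]
    show 0 ≤ (-1 : ℝ) ^ l.length * ((-1) * (op (Pl l) f : ℝ → ℝ) x)
    rw [hR]
    have := mul_pos (neg_pos.2 hcon) (Real.exp_pos (-b * x))
    linarith) (hz.smul _)
  have h2 : 0 ≤ (-1 : ℝ) * (f : ℝ → ℝ) c := this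
  linarith

theorem eq_ex {r : E} {β a : ℝ} (h : ∀ x, (r : ℝ → ℝ) x = β * Real.exp (-a * x)) :
    r = β • ex (-a) := by
  apply Subtype.ext; funext x
  exact h x

theorem step (l : List ℝ) (hl : ∀ a ∈ l, 0 < a) (a : ℝ) (ha : 0 < a) (ha1 : a ≤ 1) (u v : E)
    (hu : op (Pl (1 :: l)) u = 0) (hv : op (Pl (a :: l)) v = 0)
    (t : ℕ → ℝ) (ht : ∀ i < l.length, t i < t (i+1))
    (huv : ∀ i ≤ l.length, (u : ℝ → ℝ) (t i) = (v : ℝ → ℝ) (t i))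
    (hsgn : ∀ i ≤ l.length, 0 < (-1 : ℝ) ^ i * (u : ℝ → ℝ) (t i)) :
    (D (D v) : ℝ → ℝ) (t 0) ≤ (D (D u) : ℝ → ℝ) (t 0) := by
  obtain ⟨β, hβ⟩ := solve1 1 (op (Pl l) u) (by rw [← op_cons']; exact hu)
  have hzu : HZ u (t 0) l.length := by
    apply HZ_of_alt _ (cont u) _ t ht
    intro i hi
    have h1 := hsgn i hi.le
    have h2 := hsgn (i+1) hi
    rw [pow_succ] at h2
    have h3 := mul_pos h1 h2
    have h4 := neg_one_sq_pow i
    nlinarith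
  have hβs := beta_sign l u (t 0) β 1 hβ hzu (by simpa using hsgn 0 (by omega))
  have hru := eq_ex hβ
  set f := u - v with hf
  have hf0 : op (Pl (a :: 1 :: l)) f = 0 := by
    rw [hf, map_sub, op_cons' a, hu, op_cons', op_cons', op_comm, ← op_cons' a, hv]; simp
  have hpos : ∀ b ∈ (a :: 1 :: l), 0 < b := by
    intro b hb
    simp only [List.mem_cons] at hb
    rcases hb with rfl | rfl | hb
    · exact ha
    · norm_num
    · exact hl b hb
  have hlim := decay _ hpos f hf0
  have hlim' := decay _ hpos (D f) (by rw [op_D, hf0, map_zero])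
  have hzf : HZ f (t 0) l.length := by
    apply HZ_of_zeros _ _ t ht
    intro i hi
    show (u : ℝ → ℝ) (t (i+1)) - (v : ℝ → ℝ) (t (i+1)) = 0
    rw [huv (i+1) hi]; ring
  have hf00 : (f : ℝ → ℝ) (t 0) = 0 := by
    show (u : ℝ → ℝ) (t 0) - (v : ℝ → ℝ) (t 0) = 0
    rw [huv 0 (by omega)]; ring
  have hz1 := rolleInfZ f hlim _ _ hf00 hzf
  have hz2 := rolleInfS (D f) hlim' _ _ hz1
  have key := lemA' (a :: l) (D (D f)) (t 0) (by
    intro x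
    have : op (Pl (a :: l)) (D (D f)) = (β * (a - 1)) • ex (-1) := by
      rw [op_D, op_D, hf, map_sub, hv, sub_zero, op_cons', hru, op_lin]
      simp only [map_add, map_smul, D_ex]
      module
    rw [this, List.length_cons, pow_succ]
    show 0 ≤ (-1 : ℝ) ^ l.length * (-1) * (β * (a - 1) * Real.exp (-1 * x))
    have h1 := mul_nonneg (mul_nonneg hβs (sub_nonneg.2 ha1)) (Real.exp_pos (-1 * x)).le
    linarith) hz2
  have key' : 0 ≤ (D (D u) : ℝ → ℝ) (t 0) - (D (D v) : ℝ → ℝ) (t 0) := by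
    rw [hf, map_sub, map_sub] at key
    exact key
  linarith

theorem chain (n : ℕ) (u0 : E) (t : ℕ → ℝ) (ht : ∀ i < n, t i < t (i+1))
    (hu0 : op (Pl (List.replicate (n+1) 1)) u0 = 0)
    (hsgn : ∀ i ≤ n, 0 < (-1 : ℝ) ^ i * (u0 : ℝ → ℝ) (t i)) (l1 : List ℝ) :
    (∀ a ∈ l1, 0 < a ∧ a ≤ 1) → ∀ j, l1.length + j = n + 1 → ∀ v : E,
    op (Pl (l1 ++ List.replicate j 1)) v = 0 →
    (∀ i ≤ n, (v : ℝ → ℝ) (t i) = (u0 : ℝ → ℝ) (t i)) →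
    (D (D v) : ℝ → ℝ) (t 0) ≤ (D (D u0) : ℝ → ℝ) (t 0) := by
  induction l1 with
  | nil =>
    intro _ j hj v hv hi
    simp only [List.length_nil, zero_add] at hj
    subst hj
    rw [List.nil_append] at hv
    rw [List.replicate_succ] at hv hu0
    refine step (List.replicate n 1) ?_ 1 one_pos le_rfl u0 v hu0 hv t ?_ ?_ ?_
    · intro a ha
      rw [List.eq_of_mem_replicate ha]; norm_num
    · simpa using ht
    · intro i h; exact (hi i (by simpa using h)).symm
    · simpa using hsgn
  | cons a l ih =>
    intro hl j hj v hv hi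
    have hlen : (l ++ List.replicate j (1:ℝ)).length = n := by
      simp at hj ⊢; omega
    have hla : ∀ b ∈ l, 0 < b ∧ b ≤ 1 := fun b hb => hl b (by simp [hb])
    obtain ⟨u, hu, hui⟩ := interp (1 :: (l ++ List.replicate j (1:ℝ))) t
      (by intro i h; simp only [List.length_cons, hlen] at h; exact ht i (by omega))
      (fun i => (u0 : ℝ → ℝ) (t i))
    simp only [List.length_cons, hlen] at hui
    have h1 := ih hla (j+1) (by simp at hj ⊢; omega) u (by
      have : Pl (l ++ List.replicate (j+1) (1:ℝ)) = Pl (1 :: (l ++ List.replicate j (1:ℝ))) := by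
        simp only [Pl]
        apply List.Perm.prod_eq
        apply List.Perm.map
        rw [List.replicate_succ]
        exact List.perm_middle
      rw [this]; exact hu) (fun i h => hui i (by omega))
    refine le_trans ?_ h1
    refine step (l ++ List.replicate j 1) ?_ a (hl a (by simp)).1 (hl a (by simp)).2 u v hu hv t ?_ ?_ ?_
    · intro b hb
      rcases List.mem_append.1 hb with hb | hb
      · exact (hla b hb).1
      · rw [List.eq_of_mem_replicate hb]; norm_num
    · rw [hlen]; exact ht
    · rw [hlen]; intro i h; rw [hui i (by omega), hi i h]
    · rw [hlen]; intro i h; rw [hui i (by omega)]; exact hsgn i h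

theorem compare (n : ℕ) (l : List ℝ) (hlen : l.length = n + 1) (hl : ∀ a ∈ l, 0 < a) (v p : E)
    (t : ℕ → ℝ) (ht : ∀ i < n, t i < t (i+1))
    (hv : op (Pl l) v = 0) (hp : op (Pl l) p = 0)
    (h : ∀ i ≤ n, |(p : ℝ → ℝ) (t i)| < (-1 : ℝ) ^ i * (v : ℝ → ℝ) (t i)) :
    (D (D p) : ℝ → ℝ) (t 0) ≤ (D (D v) : ℝ → ℝ) (t 0) := by
  match l, hlen with
  | b :: l, hlen =>
  have hlen' : l.length = n := by simpa using hlen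
  subst hlen'
  set f := v - p with hf
  have hf0 : op (Pl (b :: l)) f = 0 := by rw [hf, map_sub, hv, hp, sub_zero]
  obtain ⟨β, hβ⟩ := solve1 b (op (Pl l) f) (by rw [← op_cons']; exact hf0)
  have hsgn : ∀ i ≤ l.length, 0 < (-1 : ℝ) ^ i * (f : ℝ → ℝ) (t i) := by
    intro i hi
    have h1 := h i hi
    show 0 < (-1 : ℝ) ^ i * ((v : ℝ → ℝ) (t i) - (p : ℝ → ℝ) (t i))
    have h2 : (-1 : ℝ) ^ i * (p : ℝ → ℝ) (t i) ≤ |(p : ℝ → ℝ) (t i)| := by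
      refine (le_abs_self _).trans ?_
      rw [abs_mul]; simp
    linarith
  have hzf : HZ f (t 0) l.length := by
    apply HZ_of_alt _ (cont f) _ t ht
    intro i hi
    have h1 := hsgn i hi.le
    have h2 := hsgn (i+1) hi
    rw [pow_succ] at h2
    have h3 := mul_pos h1 h2
    have h4 := neg_one_sq_pow i
    nlinarith
  have hβs := beta_sign l f (t 0) β b hβ hzf (by simpa using hsgn 0 (by omega))
  have hru := eq_ex hβ
  have hlim := decay _ hl f hf0
  have hlim' := decay _ hl (D f) (by rw [op_D, hf0, map_zero])
  have hz2 := rolleInfS (D f) hlim' _ _ (rolleInfS f hlim _ _ hzf)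
  have key := lemA' l (D (D f)) (t 0) (by
    intro x
    have : op (Pl l) (D (D f)) = (β * b ^ 2) • ex (-b) := by
      rw [op_D, op_D, hru]
      simp only [map_smul, D_ex]
      module
    rw [this]
    show 0 ≤ (-1 : ℝ) ^ l.length * (β * b ^ 2 * Real.exp (-b * x))
    have h1 := mul_nonneg (mul_nonneg hβs (sq_nonneg b)) (Real.exp_pos (-b * x)).le
    linarith) hz2
  have key' : 0 ≤ (D (D v) : ℝ → ℝ) (t 0) - (D (D p) : ℝ → ℝ) (t 0) := by
    rw [hf, map_sub, map_sub] at key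
    exact key
  linarith

theorem mainE (n : ℕ) (u0 : E) (t : ℕ → ℝ) (ht : ∀ i < n, t i < t (i+1))
    (hu0 : op (Pl (List.replicate (n+1) 1)) u0 = 0)
    (hsgn : ∀ i ≤ n, 1 ≤ (-1 : ℝ) ^ i * (u0 : ℝ → ℝ) (t i)) (l : List ℝ)
    (hlen : l.length = n + 1) (hl : ∀ a ∈ l, 0 < a ∧ a ≤ 1) (p : E) (hp : op (Pl l) p = 0)
    (K : ℝ) (hK : ∀ i ≤ n, |(p : ℝ → ℝ) (t i)| < K) :
    |(D (D p) : ℝ → ℝ) (t 0)| ≤ (D (D u0) : ℝ → ℝ) (t 0) * K := by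
  obtain ⟨v, hv, hvi⟩ := interp l t (fun i h => ht i (by omega)) (fun i => (u0 : ℝ → ℝ) (t i))
  have hK0 : 0 < K := lt_of_le_of_lt (abs_nonneg _) (hK 0 (by omega))
  have h1 := chain n u0 t ht hu0 (fun i hi => lt_of_lt_of_le one_pos (hsgn i hi)) l hl 0 (by omega) v
    (by simpa using hv) (fun i hi => hvi i (by omega))
  have key : ∀ s : ℝ, |s| = 1 → s * (D (D p) : ℝ → ℝ) (t 0) ≤ K * (D (D v) : ℝ → ℝ) (t 0) := by
    intro s hs
    have := compare n l hlen (fun a ha => (hl a ha).1) (K • v) (s • p) t ht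
      (by rw [map_smul, hv, smul_zero]) (by rw [map_smul, hp, smul_zero]) (by
        intro i hi
        show |s * (p : ℝ → ℝ) (t i)| < (-1 : ℝ) ^ i * (K * (v : ℝ → ℝ) (t i))
        rw [abs_mul, hs, one_mul, hvi i (by omega)]
        refine lt_of_lt_of_le (hK i hi) ?_
        have := mul_le_mul_of_nonneg_left (hsgn i hi) hK0.le
        linarith)
    simp only [map_smul] at this
    exact this
  have k1 := key 1 (by simp)
  have k2 := key (-1) (by simp)
  have := mul_le_mul_of_nonneg_left h1 hK0.le
  rw [abs_le]; constructor <;> linarith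



/-- polynomial times exponential -/
noncomputable def pe (q : ℝ[X]) (b : ℝ) : E := ⟨fun x => q.eval x * Real.exp (-b * x), by
  show ContDiff ℝ ∞ _
  have h1 : ContDiff ℝ ∞ (fun x : ℝ => q.eval x) := by
    simpa using Polynomial.contDiff_aeval (𝕜 := ℝ) q ∞
  exact h1.mul (by fun_prop)⟩

theorem pe_apply (q : ℝ[X]) (b x : ℝ) : (pe q b : ℝ → ℝ) x = q.eval x * Real.exp (-b * x) := rfl

theorem D_pe (q : ℝ[X]) (b : ℝ) : D (pe q b) = pe (derivative q - C b * q) b := by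
  apply Subtype.ext; funext x
  have h1 : HasDerivAt (fun x => Real.exp (-b * x)) (Real.exp (-b * x) * (-b * 1)) x :=
    ((hasDerivAt_id x).const_mul (-b)).exp
  refine ((q.hasDerivAt x).mul h1).deriv.trans ?_
  rw [pe_apply]
  simp only [eval_sub, eval_mul, eval_C]
  ring

theorem op_pe (q : ℝ[X]) (b c : ℝ) :
    op (X + C c) (pe q b) = pe (derivative q + C (c - b) * q) b := by
  rw [op_lin, D_pe]
  apply Subtype.ext; funext x
  show (pe _ _ : ℝ → ℝ) x + c * (pe _ _ : ℝ → ℝ) x = _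
  simp only [pe_apply, eval_sub, eval_add, eval_mul, eval_C]
  ring

theorem kill (b : ℝ) (l : List ℝ) : ∀ q : ℝ[X], q.degree < (l.count b : ℕ) →
    op (Pl l) (pe q b) = 0 := by
  induction l with
  | nil =>
    intro q hq
    have : q = 0 := by
      rw [← degree_eq_bot]
      simpa using hq
    subst this
    rw [Pl_nil, op_one]
    apply Subtype.ext; funext x
    simp [pe_apply]
  | cons c l ih =>
    intro q hq
    rw [op_cons, op_pe]
    apply ih
    by_cases hc : c = b
    · subst hc
      simp only [sub_self, map_zero, zero_mul, add_zero]
      rw [List.count_cons_self] at hq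
      by_cases hq0 : q = 0
      · subst hq0; simp
      · have h1 := degree_derivative_lt hq0
        rw [degree_eq_natDegree hq0] at h1 hq
        have h2 : q.natDegree < l.count c + 1 := by exact_mod_cast hq
        refine lt_of_lt_of_le h1 ?_
        exact_mod_cast (by omega : q.natDegree ≤ l.count c)
    · rw [List.count_cons_of_ne (by simpa using hc)] at hq
      refine lt_of_le_of_lt (degree_add_le _ _) (max_lt ?_ ?_)
      · exact lt_of_le_of_lt degree_derivative_le hq
      · rw [← smul_eq_C_mul]
        exact lt_of_le_of_lt (degree_smul_le _ _) hq

/-- Hermite type polynomials. -/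
noncomputable def Q : ℕ → ℝ[X]
  | 0 => 1
  | n + 1 => 8 * X * Q n - 4 * X * derivative (Q n) - C (4 * (n : ℝ) + 2) * Q n

theorem Q_ode (n : ℕ) : 2 * X * derivative (derivative (Q n)) + (1 - 4 * X) * derivative (Q n)
    + C (4 * (n : ℝ)) * Q n = 0 := by
  induction n with
  | zero => simp [Q]
  | succ n ih =>
    have h8 : (8 : ℝ[X]) = C 8 := rfl
    have h4 : (4 : ℝ[X]) = C 4 := rfl
    have h2 : (2 : ℝ[X]) = C 2 := rfl
    have ih2 := congrArg derivative ih
    simp only [h8, h4, h2, derivative_add, derivative_sub, derivative_mul, derivative_C, derivative_X, derivative_one,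
      derivative_zero, Q] at ih ih2 ⊢
    push_cast at ih ih2 ⊢
    simp only [map_add, map_mul, map_one] at ih ih2 ⊢
    simp only [← h8, ← h4, ← h2] at ih ih2 ⊢
    linear_combination (8 * X - 6 - 4 * C (n : ℝ)) * ih - 4 * X * ih2

theorem Q_deg (n : ℕ) : (Q n).natDegree ≤ n := by
  induction n with
  | zero => simp [Q]
  | succ n ih =>
    have h8 : (8 : ℝ[X]) = C 8 := rfl
    have h4 : (4 : ℝ[X]) = C 4 := rfl
    rw [Q, h8, h4]
    have hd : (derivative (Q n)).natDegree ≤ n := (natDegree_derivative_le _).trans (by omega)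
    refine (natDegree_sub_le _ _).trans (max_le ((natDegree_sub_le _ _).trans (max_le ?_ ?_)) ?_)
    · rw [mul_assoc]
      refine (natDegree_C_mul_le _ _).trans (natDegree_mul_le.trans ?_)
      simp; omega
    · rw [mul_assoc]
      refine (natDegree_C_mul_le _ _).trans (natDegree_mul_le.trans ?_)
      simp; omega
    · exact (natDegree_C_mul_le _ _).trans (by omega)

theorem Q_eval_succ (n : ℕ) (x : ℝ) : (Q (n+1)).eval x =
    8 * x * (Q n).eval x - 4 * x * (derivative (Q n)).eval x - (4 * n + 2) * (Q n).eval x := by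
  simp [Q]

theorem Q_zero_pos (n : ℕ) : 0 < (-1 : ℝ) ^ n * (Q n).eval 0 := by
  induction n with
  | zero => simp [Q]
  | succ n ih =>
    rw [Q_eval_succ, pow_succ]
    have : (0:ℝ) < 4 * n + 2 := by positivity
    nlinarith [mul_pos this ih]

theorem pe_decay (r : ℝ[X]) : Tendsto (pe r 1 : ℝ → ℝ) atTop (𝓝 0) := by
  apply decay (List.replicate (r.natDegree + 1) 1)
  · intro a ha
    rw [List.eq_of_mem_replicate ha]; norm_num
  · apply kill
    rw [List.count_replicate_self]
    refine lt_of_le_of_lt degree_le_natDegree ?_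
    exact_mod_cast Nat.lt_succ_self _

/-- auxiliary function -/
noncomputable def G (n : ℕ) (x : ℝ) : ℝ := x ^ (2 * n + 1) * Real.exp (-2 * x ^ 2) * (Q n).eval (x ^ 2)

theorem G_deriv (n : ℕ) (x : ℝ) : HasDerivAt (G n)
    (-(1 / 2) * x ^ (2 * n) * Real.exp (-2 * x ^ 2) * (Q (n+1)).eval (x ^ 2)) x := by
  have h1 : HasDerivAt (fun x : ℝ => x ^ 2) (2 * x) x := by simpa using hasDerivAt_pow 2 x
  have h2 : HasDerivAt (fun x : ℝ => Real.exp (-2 * x ^ 2)) (Real.exp (-2 * x ^ 2) * (-2 * (2 * x))) x :=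
    (h1.const_mul (-2)).exp
  have h3 : HasDerivAt (fun x : ℝ => (Q n).eval (x ^ 2)) ((derivative (Q n)).eval (x ^ 2) * (2 * x)) x :=
    HasDerivAt.comp (h₂ := fun y => (Q n).eval y) x ((Q n).hasDerivAt (x ^ 2)) h1
  have h4 := ((hasDerivAt_pow (2 * n + 1) x).mul h2).mul h3
  refine h4.congr_deriv ?_
  rw [Q_eval_succ]
  simp only [Nat.add_sub_cancel, Pi.mul_apply]
  push_cast
  ring

theorem G_small (n : ℕ) (ε : ℝ) (hε : 0 < ε) : ∀ᶠ x in atTop, |G n x| < ε := by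
  have h1 := pe_decay (X ^ (2 * n + 1) * (Q n).comp (X ^ 2))
  rw [Metric.tendsto_nhds] at h1
  filter_upwards [h1 ε hε, eventually_ge_atTop 1] with x hx hx1
  rw [Real.dist_eq, sub_zero, pe_apply] at hx
  refine lt_of_le_of_lt ?_ hx
  simp only [eval_mul, eval_pow, eval_X, eval_comp]
  rw [G, mul_right_comm, abs_mul _ (Real.exp _), abs_mul _ (Real.exp _), Real.abs_exp, Real.abs_exp]
  apply mul_le_mul_of_nonneg_left _ (abs_nonneg _)
  apply Real.exp_le_exp.2
  nlinarith

theorem alt (n : ℕ) : ∃ x : ℕ → ℝ, 0 < x 0 ∧ (∀ i < n, x i < x (i+1)) ∧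
    ∀ i ≤ n, 0 < (-1 : ℝ) ^ (n + i) * (Q n).eval (x i ^ 2) := by
  induction n with
  | zero => exact ⟨fun _ => 1, by simp, by simp, by simp [Q]⟩
  | succ n ih =>
    obtain ⟨x, hx0, hxm, hxs⟩ := ih
    have hxpos : ∀ i ≤ n, 0 < x i := by
      intro i
      induction i with
      | zero => intro _; exact hx0
      | succ i ih => intro h; exact (ih (by omega)).trans (hxm i (by omega))
    have hG : ∀ i ≤ n, 0 < (-1 : ℝ) ^ (n + i) * G n (x i) := by
      intro i hi
      have h1 := hxs i hi
      have h2 := hxpos i hi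
      have h3 : 0 < x i ^ (2 * n + 1) * Real.exp (-2 * x i ^ 2) := by positivity
      have := mul_pos h3 h1
      rw [G]; linarith
    obtain ⟨B, hB, hBx⟩ := ((G_small n _ (hG n le_rfl)).and (eventually_gt_atTop (x n))).exists
    set x' : ℕ → ℝ := fun i => if i = 0 then 0 else if i ≤ n + 1 then x (i - 1) else B with hx'
    have hx'0 : x' 0 = 0 := by simp [hx']
    have hx'1 : ∀ i ≤ n, x' (i + 1) = x i := by intro i hi; simp [hx', hi]
    have hx'2 : x' (n + 2) = B := by simp [hx']
    have main : ∀ i ≤ n + 1, x' i < x' (i+1) ∧ 0 ≤ x' i ∧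
        0 < (-1 : ℝ) ^ (n + i) * (G n (x' (i+1)) - G n (x' i)) := by
      intro i hi
      rcases Nat.lt_or_ge n i with h | h
      · have : i = n + 1 := by omega
        subst this
        rw [hx'2, hx'1 n le_rfl]
        refine ⟨hBx, (hxpos n le_rfl).le, ?_⟩
        have h1 : -((-1 : ℝ) ^ (n + n + 1) * G n B) ≤ |G n B| := by
          refine (neg_le_abs _).trans ?_
          rw [abs_mul]; simp
        have h2 : (-1 : ℝ) ^ (n + (n + 1)) = - (-1 : ℝ) ^ (n + n) := by
          rw [← add_assoc, pow_succ]; ring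
        rw [← add_assoc] at h2
        rw [← add_assoc]
        rw [h2] at h1 ⊢
        linarith
      · rcases Nat.eq_zero_or_pos i with h0 | h0
        · subst h0
          rw [hx'1 0 h, hx'0]
          refine ⟨hx0, le_rfl, ?_⟩
          have := hG 0 h
          simpa [G] using this
        · obtain ⟨j, rfl⟩ : ∃ j, i = j + 1 := ⟨i - 1, by omega⟩
          rw [hx'1 _ h, hx'1 j (by omega)]
          refine ⟨hxm j (by omega), (hxpos j (by omega)).le, ?_⟩
          have h1 := hG (j+1) h
          have h2 := hG j (by omega)
          have h3 : (-1 : ℝ) ^ (n + (j + 1)) = - (-1 : ℝ) ^ (n + j) := by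
            rw [← add_assoc, pow_succ]; ring
          rw [h3] at h1 ⊢
          linarith
    have mvt : ∀ i, ∃ y, i ≤ n + 1 → x' i < y ∧ y < x' (i+1) ∧
        0 < (-1 : ℝ) ^ (n + 1 + i) * (Q (n+1)).eval (y ^ 2) := by
      intro i
      by_cases hi : i ≤ n + 1
      · obtain ⟨h1, h2, h3⟩ := main i hi
        obtain ⟨y, hy, hy'⟩ := exists_hasDerivAt_eq_slope (G n) _ h1
          (fun x _ => (G_deriv n x).continuousAt.continuousWithinAt) (fun x _ => G_deriv n x)
        refine ⟨y, fun _ => ⟨hy.1, hy.2, ?_⟩⟩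
        have hypos : 0 < y := lt_of_le_of_lt h2 hy.1
        rw [eq_div_iff (sub_ne_zero.2 h1.ne')] at hy'
        rw [← hy'] at h3
        have h4 : 0 < (1 / 2) * y ^ (2 * n) * Real.exp (-2 * y ^ 2) * (x' (i+1) - x' i) :=
          mul_pos (by positivity) (sub_pos.2 h1)
        have h5 : (-1 : ℝ) ^ (n + 1 + i) = - (-1 : ℝ) ^ (n + i) := by
          rw [show n + 1 + i = n + i + 1 by ring, pow_succ]; ring
        rw [h5]
        refine pos_of_mul_pos_right (a := (1 / 2) * y ^ (2 * n) * Real.exp (-2 * y ^ 2) * (x' (i+1) - x' i)) ?_ h4.le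
        linarith
      · exact ⟨0, fun h => absurd h hi⟩
    choose y hy using mvt
    refine ⟨y, ?_, ?_, ?_⟩
    · have := (hy 0 (by omega)).1
      rwa [hx'0] at this
    · intro i hi
      exact (hy i (by omega)).2.1.trans (hy (i+1) (by omega)).1
    · intro i hi
      exact (hy i hi).2.2

theorem sonin (g : E) (A : ℝ) (hA : 0 < A)
    (ode : ∀ t, 2 * t * (D (D g) : ℝ → ℝ) t + (D g : ℝ → ℝ) t + (A - 2 * t) * (g : ℝ → ℝ) t = 0)
    (h0 : ((g : ℝ → ℝ) 0) ^ 2 = 1) (s : ℝ) (hs : 0 < s) (hmax : IsLocalMax (g : ℝ → ℝ) s)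
    (hpos : 0 < (g : ℝ → ℝ) s) : 1 ≤ (g : ℝ → ℝ) s := by
  have hd0 : (D g : ℝ → ℝ) s = 0 := hmax.hasDerivAt_eq_zero (hasD g s)
  have hsA : 2 * s ≤ A := by
    by_contra hcon
    push Not at hcon
    have h1 := ode s
    rw [hd0] at h1
    have h2 : 0 < (D (D g) : ℝ → ℝ) s := by
      have h3 := mul_pos (sub_pos.2 hcon) hpos
      by_contra h4
      push Not at h4
      have := mul_nonpos_of_nonneg_of_nonpos hs.le h4
      linarith
    have hmin : IsLocalMin (g : ℝ → ℝ) s :=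
      isLocalMin_of_deriv_deriv_pos (f := (g : ℝ → ℝ)) h2 hd0 (cont g).continuousAt
    have heq : (g : ℝ → ℝ) =ᶠ[𝓝 s] fun _ => (g : ℝ → ℝ) s := by
      filter_upwards [hmax, hmin] with x hx1 hx2
      exact le_antisymm hx1 hx2
    have h5 := heq.deriv.deriv_eq
    have h6 : deriv (deriv (g : ℝ → ℝ)) s = (D (D g) : ℝ → ℝ) s := rfl
    rw [h6] at h5
    simp at h5
    linarith
  set φ : ℝ → ℝ := fun t => 2 * t * ((D g : ℝ → ℝ) t * (D g : ℝ → ℝ) t)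
    - (1 - (g : ℝ → ℝ) t * (g : ℝ → ℝ) t) * (A - 2 * t) with hφ
  have hlin : ∀ t : ℝ, HasDerivAt (fun t : ℝ => A - 2 * t) (-(2 * 1)) t := by
    intro t
    exact ((hasDerivAt_id t).const_mul 2).const_sub A
  have hφd : ∀ t, HasDerivAt φ (2 * (1 - (g : ℝ → ℝ) t ^ 2)) t := by
    intro t
    have h1 := ((((hasDerivAt_id t).const_mul 2).mul ((hasD (D g) t).mul (hasD (D g) t))).sub
      (((hasD g t).mul (hasD g t)).const_sub 1 |>.mul (hlin t)))
    refine h1.congr_deriv ?_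
    have := ode t
    simp only [id, Pi.mul_apply]
    linear_combination (2 * (D g : ℝ → ℝ) t) * this
  have hφ0 : φ 0 = 0 := by
    simp only [hφ]
    linear_combination A * h0
  have hmono : MonotoneOn (fun t => φ t / (A - 2 * t)) (Set.Ico 0 (A / 2)) := by
    have hd : ∀ t ∈ Set.Ico 0 (A / 2), HasDerivAt (fun t => φ t / (A - 2 * t))
        ((2 * (1 - (g : ℝ → ℝ) t ^ 2) * (A - 2 * t) - φ t * (-(2 * 1))) / (A - 2 * t) ^ 2) t := by
      intro t ht
      exact (hφd t).div (hlin t) (by have := ht.2; intro h; linarith)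
    apply monotoneOn_of_hasDerivWithinAt_nonneg (convex_Ico _ _)
      (fun t ht => (hd t ht).continuousAt.continuousWithinAt)
      (fun t ht => (hd t (interior_subset ht)).hasDerivWithinAt)
    intro t ht
    have ht' := interior_subset ht
    apply div_nonneg _ (sq_nonneg _)
    have h2 := mul_nonneg ht'.1 (sq_nonneg ((D g : ℝ → ℝ) t))
    simp only [hφ]
    nlinarith
  have hφnn : ∀ t, 0 ≤ t → t < A / 2 → 0 ≤ φ t := by
    intro t ht0 ht1
    have h1 := hmono (Set.mem_Ico.2 ⟨le_rfl, by linarith⟩) (Set.mem_Ico.2 ⟨ht0, ht1⟩) ht0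
    simp only [hφ0, zero_div] at h1
    have h2 : 0 < A - 2 * t := by linarith
    have h3 := mul_nonneg h1 h2.le
    rwa [div_mul_cancel₀ _ h2.ne'] at h3
  have hφs : φ s = - (1 - (g : ℝ → ℝ) s * (g : ℝ → ℝ) s) * (A - 2 * s) := by
    simp only [hφ, hd0]; ring
  by_contra hlt
  push Not at hlt
  have hg2 : 0 < 1 - (g : ℝ → ℝ) s * (g : ℝ → ℝ) s := by nlinarith
  rcases hsA.lt_or_eq with h | h
  · have h1 := hφnn s hs.le (by linarith)
    rw [hφs] at h1
    have := mul_pos hg2 (sub_pos.2 h)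
    linarith
  · have hev : ∀ᶠ t in 𝓝 s, 0 < 1 - (g : ℝ → ℝ) t * (g : ℝ → ℝ) t := by
      have hc : Continuous fun t => 1 - (g : ℝ → ℝ) t * (g : ℝ → ℝ) t := by
        have := cont g
        fun_prop
      exact hc.continuousAt.eventually_const_lt hg2
    obtain ⟨δ, hδ, hball⟩ := Metric.eventually_nhds_iff.1 hev
    set η := min (δ / 2) (s / 2) with hη
    have hη0 : 0 < η := lt_min (by linarith) (by linarith)
    have hη1 : η ≤ δ / 2 := min_le_left _ _
    have hη2 : η ≤ s / 2 := min_le_right _ _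
    have hsm : StrictMonoOn φ (Set.Icc (s - η) s) := by
      apply strictMonoOn_of_hasDerivWithinAt_pos (convex_Icc _ _)
        (fun t _ => (hφd t).continuousAt.continuousWithinAt)
        (fun t _ => (hφd t).hasDerivWithinAt)
      intro t ht
      rw [interior_Icc] at ht
      have := hball (y := t) (by rw [Real.dist_eq, abs_lt]; constructor <;> linarith [ht.1, ht.2])
      nlinarith
    have h1 := hsm (Set.left_mem_Icc.2 (by linarith)) (Set.right_mem_Icc.2 (by linarith)) (by linarith)
    have h2 := hφnn (s - η) (by linarith) (by linarith)
    rw [hφs, h] at h1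
    simp at h1
    linarith

theorem crit (g : E) {a m b : ℝ} (ham : a < m) (hmb : m < b) (h1 : (g : ℝ → ℝ) a < (g : ℝ → ℝ) m)
    (h2 : (g : ℝ → ℝ) b < (g : ℝ → ℝ) m) :
    ∃ s, a < s ∧ s < b ∧ (g : ℝ → ℝ) m ≤ (g : ℝ → ℝ) s ∧ IsLocalMax (g : ℝ → ℝ) s := by
  obtain ⟨s, hs, hmax⟩ := isCompact_Icc.exists_isMaxOn (Set.nonempty_Icc.2 (ham.trans hmb).le)
    (cont g).continuousOn
  have hm : (g : ℝ → ℝ) m ≤ (g : ℝ → ℝ) s := hmax (Set.mem_Icc.2 ⟨ham.le, hmb.le⟩)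
  have has : a < s := lt_of_le_of_ne hs.1 (by rintro rfl; linarith)
  have hsb : s < b := lt_of_le_of_ne hs.2 (by rintro rfl; linarith)
  exact ⟨s, has, hsb, hm, hmax.isLocalMax (Icc_mem_nhds has hsb)⟩

/-- extremal function -/
noncomputable def U (n : ℕ) : E := ((Q n).eval 0)⁻¹ • pe (Q n) 1

theorem Q0_ne (n : ℕ) : (Q n).eval 0 ≠ 0 := by
  intro h
  have := Q_zero_pos n
  rw [h] at this; simp at this

theorem U_ker (n : ℕ) : op (Pl (List.replicate (n+1) 1)) (U n) = 0 := by
  rw [U, map_smul, kill, smul_zero]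
  rw [List.count_replicate_self]
  refine lt_of_le_of_lt degree_le_natDegree ?_
  exact_mod_cast Nat.lt_succ_of_le (Q_deg n)

theorem U_zero (n : ℕ) : (U n : ℝ → ℝ) 0 = 1 := by
  show ((Q n).eval 0)⁻¹ * (pe (Q n) 1 : ℝ → ℝ) 0 = 1
  rw [pe_apply]; simp [Q0_ne n]

theorem U_apply (n : ℕ) (t : ℝ) : (U n : ℝ → ℝ) t = ((Q n).eval 0)⁻¹ * ((Q n).eval t * Real.exp (-1 * t)) := rfl

theorem DU_apply (n : ℕ) (t : ℝ) : (D (U n) : ℝ → ℝ) t =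
    ((Q n).eval 0)⁻¹ * (((derivative (Q n)).eval t - (Q n).eval t) * Real.exp (-1 * t)) := by
  rw [U, map_smul, D_pe]
  show _ * (pe _ 1 : ℝ → ℝ) t = _
  rw [pe_apply]; simp

theorem DDU_apply (n : ℕ) (t : ℝ) : (D (D (U n)) : ℝ → ℝ) t =
    ((Q n).eval 0)⁻¹ * (((derivative (derivative (Q n))).eval t - 2 * (derivative (Q n)).eval t
      + (Q n).eval t) * Real.exp (-1 * t)) := by
  rw [U, map_smul, D_pe, map_smul, D_pe]
  show _ * (pe _ 1 : ℝ → ℝ) t = _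
  rw [pe_apply]; simp; left; ring

theorem Q_ode_eval (n : ℕ) (t : ℝ) : 2 * t * (derivative (derivative (Q n))).eval t
    + (1 - 4 * t) * (derivative (Q n)).eval t + 4 * n * (Q n).eval t = 0 := by
  have := congrArg (eval t) (Q_ode n)
  simpa using this

theorem U_ode (n : ℕ) (t : ℝ) : 2 * t * (D (D (U n)) : ℝ → ℝ) t + (D (U n) : ℝ → ℝ) t
    + ((4 * n + 1) - 2 * t) * (U n : ℝ → ℝ) t = 0 := by
  rw [U_apply, DU_apply, DDU_apply]
  linear_combination (((Q n).eval 0)⁻¹ * Real.exp (-1 * t)) * Q_ode_eval n t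

theorem DDU_zero (n : ℕ) : (D (D (U n)) : ℝ → ℝ) 0 = (16 * (n:ℝ) ^ 2 + 8 * n + 3) / 3 := by
  have h1 := Q_ode_eval n 0
  have h2 := congrArg (eval 0) (congrArg derivative (Q_ode n))
  simp at h1 h2
  rw [DDU_apply]
  have h3 := Q0_ne n
  simp only [mul_zero, Real.exp_zero, mul_one]
  rw [inv_mul_eq_iff_eq_mul₀ h3]
  linear_combination (1 / 3) * h2 + (-(4 * (n : ℝ) + 2) / 3) * h1

theorem nodes (n : ℕ) : ∃ t : ℕ → ℝ, t 0 = 0 ∧ (∀ i < n, t i < t (i+1)) ∧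
    ∀ i ≤ n, 1 ≤ (-1 : ℝ) ^ i * (U n : ℝ → ℝ) (t i) := by
  obtain ⟨x, hx0, hxm, hxs⟩ := alt n
  have hxpos : ∀ i ≤ n, 0 < x i := by
    intro i
    induction i with
    | zero => intro _; exact hx0
    | succ i ih => intro h; exact (ih (by omega)).trans (hxm i (by omega))
  set τ : ℕ → ℝ := fun i => x i ^ 2 with hτ
  have hτpos : ∀ i ≤ n, 0 < τ i := fun i hi => pow_pos (hxpos i hi) 2
  have hτm : ∀ i < n, τ i < τ (i+1) := fun i hi =>
    pow_lt_pow_left₀ (hxm i hi) (hxpos i hi.le).le (by norm_num)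
  have hs : ∀ i ≤ n, 0 < (-1 : ℝ) ^ i * (U n : ℝ → ℝ) (τ i) := by
    intro i hi
    have h1 := hxs i hi
    have h2 := Q_zero_pos n
    have h3 : 0 < (-1 : ℝ) ^ n * ((Q n).eval 0)⁻¹ := by
      have := inv_pos.2 h2
      rw [mul_inv, ← inv_pow] at this
      norm_num at this
      exact this
    have h4 := mul_pos (mul_pos h1 h3) (Real.exp_pos (-1 * τ i))
    rw [U_apply]
    rw [pow_add] at h1 h4
    have h5 := neg_one_sq_pow n
    calc (0:ℝ) < _ := h4
      _ = ((-1 : ℝ) ^ n * (-1) ^ n) * ((-1 : ℝ) ^ i * (((Q n).eval 0)⁻¹ * ((Q n).eval (τ i) * Real.exp (-1 * τ i)))) := by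
        simp only [hτ]; ring
      _ = _ := by rw [h5, one_mul]
  have hz : ∀ i, ∃ z, i < n → τ i < z ∧ z < τ (i+1) ∧ (U n : ℝ → ℝ) z = 0 := by
    intro i
    by_cases hi : i < n
    · have h1 := hs i hi.le
      have h2 := hs (i+1) hi
      rw [pow_succ] at h2
      have hc : ContinuousOn (fun z => (-1 : ℝ) ^ i * (U n : ℝ → ℝ) z) (Set.Icc (τ i) (τ (i+1))) :=
        (continuous_const.mul (cont (U n))).continuousOn
      obtain ⟨z, hz, hz0⟩ := intermediate_value_Ioo' (hτm i hi).le hc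
        (show (0:ℝ) ∈ _ from ⟨by linarith, h1⟩)
      refine ⟨z, fun _ => ⟨hz.1, hz.2, ?_⟩⟩
      simpa using hz0
    · exact ⟨0, fun h => absurd h hi⟩
  choose z hz using hz
  have hdec : Tendsto (U n : ℝ → ℝ) atTop (𝓝 0) := decay _ (by
    intro a ha
    rw [List.eq_of_mem_replicate ha]; norm_num) _ (U_ker n)
  rw [Metric.tendsto_nhds] at hdec
  obtain ⟨B, hB, hBτ⟩ := ((hdec _ (hs n le_rfl)).and (eventually_gt_atTop (τ n))).exists
  rw [Real.dist_eq, sub_zero] at hB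
  set ζ : ℕ → ℝ := fun i => if i < n then z i else B with hζ
  have hζ1 : ∀ i < n, ζ i = z i := fun i hi => by simp [hζ, hi]
  have hζ2 : ζ n = B := by simp [hζ]
  have hc : ∀ i, ∃ s, i < n → ζ i < s ∧ s < ζ (i+1) ∧ 1 ≤ (-1 : ℝ) ^ (i+1) * (U n : ℝ → ℝ) s := by
    intro i
    by_cases hi : i < n
    · have hsi := hs (i+1) hi
      have hg : ∀ y, (((-1 : ℝ) ^ (i+1) • U n : E) : ℝ → ℝ) y = (-1 : ℝ) ^ (i+1) * (U n : ℝ → ℝ) y :=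
        fun y => rfl
      obtain ⟨z1, z2, z3⟩ := hz i hi
      obtain ⟨s, hs1, hs2, hs3, hs4⟩ := crit ((-1 : ℝ) ^ (i+1) • U n) (a := ζ i) (m := τ (i+1))
        (b := ζ (i+1)) (by rw [hζ1 i hi]; exact z2)
        (by
          rcases Nat.lt_or_ge (i+1) n with h | h
          · rw [hζ1 _ h]; exact (hz _ h).1
          · have : i + 1 = n := by omega
            rw [this, hζ2]; exact hBτ)
        (by rw [hg, hg, hζ1 i hi, z3]; simpa using hsi)
        (by
          rw [hg, hg]
          rcases Nat.lt_or_ge (i+1) n with h | h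
          · rw [hζ1 _ h, (hz _ h).2.2]; simpa using hsi
          · have : i + 1 = n := by omega
            rw [this, hζ2]
            refine lt_of_le_of_lt ((le_abs_self _).trans ?_) hB
            rw [abs_mul]; simp)
      refine ⟨s, fun _ => ⟨hs1, hs2, ?_⟩⟩
      have hspos : 0 < s := by
        have := hτpos i hi.le
        rw [hζ1 i hi] at hs1
        linarith
      refine sonin ((-1 : ℝ) ^ (i+1) • U n) (4 * n + 1) (by positivity) ?_ ?_ s hspos hs4 ?_
      · intro t
        simp only [map_smul]
        show 2 * t * ((-1 : ℝ) ^ (i+1) * (D (D (U n)) : ℝ → ℝ) t) + (-1 : ℝ) ^ (i+1) * (D (U n) : ℝ → ℝ) t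
          + (4 * n + 1 - 2 * t) * ((-1 : ℝ) ^ (i+1) * (U n : ℝ → ℝ) t) = 0
        linear_combination (-1 : ℝ) ^ (i+1) * U_ode n t
      · rw [hg, U_zero, mul_one, sq, neg_one_sq_pow]
      · refine lt_of_lt_of_le ?_ hs3
        rw [hg]; exact hsi
    · exact ⟨0, fun h => absurd h hi⟩
  choose s hs' using hc
  refine ⟨fun i => match i with | 0 => 0 | i + 1 => s i, rfl, ?_, ?_⟩
  · intro i hi
    match i with
    | 0 =>
      show 0 < s 0
      have h1 := (hs' 0 hi).1
      rw [hζ1 0 hi] at h1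
      linarith [hτpos 0 (by omega), (hz 0 hi).1]
    | i + 1 => exact (hs' i (by omega)).2.1.trans (hs' (i+1) hi).1
  · intro i hi
    match i with
    | 0 => show 1 ≤ (-1 : ℝ) ^ 0 * (U n : ℝ → ℝ) 0; rw [U_zero]; simp
    | i + 1 => exact (hs' i (by omega)).2.2

/-- translation -/
def tr (c : ℝ) (f : E) : E := ⟨fun x => (f : ℝ → ℝ) (x + c), (E.smooth f).comp (contDiff_id.add contDiff_const)⟩

theorem D_tr (c : ℝ) (f : E) : D (tr c f) = tr c (D f) := by
  apply Subtype.ext; funext x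
  exact deriv_comp_add_const (f := (f : ℝ → ℝ)) c x

theorem op_tr (c : ℝ) (l : List ℝ) : ∀ f : E, op (Pl l) (tr c f) = tr c (op (Pl l) f) := by
  induction l with
  | nil => intro f; simp [Pl_nil, op_one]
  | cons a l ih =>
    intro f
    rw [op_cons, op_cons, ← ih, op_lin, op_lin, D_tr]
    rfl

end MB

open MB in
/-- Second-order uniform Markov–Bernstein bound: for `d ≥ 2`, `0 < h₁ ≤ ⋯ ≤ h_d ≤ 1`
and `p ∈ P_h`, `sup_{t ≥ 0} |p''(t)| ≤ ((16d² − 24d + 11)/3) · sup_{t ≥ 0} |p(t)|`. -/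
theorem markov_bernstein_second_order (d : ℕ) (hd : 2 ≤ d)
    (h : Fin d → ℝ) (hmono : Monotone h) (hpos : ∀ i, 0 < h i) (hone : ∀ i, h i ≤ 1)
    (p : ℝ → ℝ) (hp : p ∈ expPoly d h) :
    ∀ t : ℝ, 0 ≤ t →
      |iteratedDeriv 2 p t| ≤
        ((16 * (d : ℝ) ^ 2 - 24 * (d : ℝ) + 11) / 3) * supAbs p := by
  intro t ht
  obtain ⟨c, hc⟩ := hp
  obtain ⟨n, rfl⟩ : ∃ n, d = n + 1 := ⟨d - 1, by omega⟩
  set m : Fin (n+1) → ℕ := fun i => Nat.card {j : Fin (n+1) // j < i ∧ h j = h i} with hm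
  set P : E := ∑ i, c i • pe (Polynomial.X ^ (m i)) (h i) with hP
  have hPp : (P : ℝ → ℝ) = p := by
    funext x
    rw [hc x, hP, AddSubmonoidClass.coe_finsetSum, Finset.sum_apply]
    apply Finset.sum_congr rfl
    intro i _
    show c i * (pe _ _ : ℝ → ℝ) x = _
    rw [pe_apply, Polynomial.eval_pow, Polynomial.eval_X]
    ring
  have hker : op (Pl (List.ofFn h)) P = 0 := by
    rw [hP, map_sum]
    apply Finset.sum_eq_zero
    intro i _
    rw [map_smul, kill, smul_zero]
    rw [Polynomial.degree_X_pow]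
    have hcount : m i < (List.ofFn h).count (h i) := by
      have h1 : (List.ofFn h).count (h i) = Fintype.card {j : Fin (n+1) // h j = h i} := by
        rw [← Multiset.coe_count, ← Fin.univ_val_map, Multiset.count_map, Fintype.card_subtype,
          Finset.card_def, Finset.filter_val]
        congr 1
        apply Multiset.filter_congr
        intro j _
        exact eq_comm
      rw [h1, hm]
      simp only
      rw [Nat.card_eq_fintype_card]
      apply Fintype.card_lt_of_injective_of_notMem
        (fun j : {j : Fin (n+1) // j < i ∧ h j = h i} => (⟨j.1, j.2.2⟩ : {j : Fin (n+1) // h j = h i}))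
        (b := ⟨i, rfl⟩)
      · intro a b hab
        simpa [Subtype.ext_iff] using hab
      · rintro ⟨j, hj⟩
        have := j.2.1
        simp [Subtype.ext_iff] at hj
        exact absurd hj this.ne
    exact_mod_cast hcount
  have hlim := decay (List.ofFn h) (by
    intro a ha
    rw [List.mem_ofFn] at ha
    obtain ⟨i, rfl⟩ := ha
    exact hpos i) P hker
  rw [hPp] at hlim
  have hcont : Continuous p := hPp ▸ cont P
  have hbdd : BddAbove ((fun t => |p t|) '' Set.Ici (0 : ℝ)) := by
    have h1 : ∀ᶠ x in Filter.atTop, |p x| < 1 := by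
      have := hlim.abs
      rw [abs_zero] at this
      exact this.eventually_lt_const one_pos
    obtain ⟨T, hT⟩ := Filter.eventually_atTop.1 h1
    obtain ⟨M, hM⟩ := (isCompact_Icc (a := (0:ℝ)) (b := T)).bddAbove_image
      (f := fun t => |p t|) hcont.abs.continuousOn
    refine ⟨max M 1, ?_⟩
    rintro _ ⟨x, hx, rfl⟩
    rcases le_total x T with h | h
    · exact le_max_of_le_left (hM ⟨x, ⟨hx, h⟩, rfl⟩)
    · exact le_max_of_le_right (hT x h).le
  have hle : ∀ x, 0 ≤ x → |p x| ≤ supAbs p := by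
    intro x hx
    rw [supAbs]
    exact le_csSup hbdd ⟨x, hx, rfl⟩
  obtain ⟨nd, hnd0, hndm, hnds⟩ := nodes n
  have hndpos : ∀ i ≤ n, 0 ≤ nd i := by
    intro i
    induction i with
    | zero => intro _; exact hnd0.ge
    | succ i ih => intro h; exact (ih (by omega)).trans (hndm i (by omega)).le
  have hDD : iteratedDeriv 2 p t = (D (D (tr t P)) : ℝ → ℝ) 0 := by
    rw [D_tr, D_tr]
    show _ = (D (D P) : ℝ → ℝ) (0 + t)
    rw [zero_add, iteratedDeriv_succ, iteratedDeriv_one, ← hPp]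
    rfl
  have key : ∀ K, supAbs p < K →
      |iteratedDeriv 2 p t| ≤ ((16 * ((n + 1 : ℕ) : ℝ) ^ 2 - 24 * ((n + 1 : ℕ) : ℝ) + 11) / 3) * K := by
    intro K hK
    have := mainE n (U n) nd hndm (U_ker n) hnds (List.ofFn h) (by simp) (by
      intro a ha
      rw [List.mem_ofFn] at ha
      obtain ⟨i, rfl⟩ := ha
      exact ⟨hpos i, hone i⟩) (tr t P) (by rw [op_tr, hker]; rfl) K (by
      intro i hi
      refine lt_of_le_of_lt ?_ hK
      show |(P : ℝ → ℝ) (nd i + t)| ≤ _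
      rw [hPp]
      exact hle _ (by have := hndpos i hi; linarith))
    rw [hnd0, ← hDD, DDU_zero] at this
    convert this using 2
    push_cast; ring
  have hC : 0 < (16 * ((n + 1 : ℕ) : ℝ) ^ 2 - 24 * ((n + 1 : ℕ) : ℝ) + 11) / 3 := by
    push_cast
    have : (0:ℝ) ≤ n := Nat.cast_nonneg n
    nlinarith
  rw [← div_le_iff₀' hC]
  apply le_of_forall_gt_imp_ge_of_dense
  intro K hK
  rw [div_le_iff₀' hC]
  exact key K hK
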